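/- Let P be a propositional normal logic program, let M_P be its well-founded model, and define the M_P-partial level mapping l_P by l_P(A) = the least ordinal α such that A is not undefined in W_P↑(α+1). Then P satisfies (WF) with respect to M_P and l_P. -/

import Mathlib

namespace LP

/-- A literal over a set of propositional atoms: an atom or a negated atom. -/
inductive Lit (atom : Type) where
  | pos : atom → Lit atom
  | neg : atom → Lit atom

/-- The underlying atom of a literal. -/
def Lit.atomOf {atom : Type} : Lit atom → atom
  | .pos a => a
  | .neg a => a

/-- A clause `head ← pos₁,…,posₙ, ¬neg₁,…,¬negₘ`. -/
structure Clause (atom : Type) where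
  head : atom
  pos : Finset atom
  neg : Finset atom

variable {atom : Type}

/-- A (propositional) normal logic program: a set of clauses. -/
abbrev Program (atom : Type) := Set (Clause atom)

/-- Partial interpretations: sets of literals. -/
abbrev Interp (atom : Type) := Set (Lit atom)

def Consistent (I : Interp atom) : Prop := ∀ a : atom, ¬ (Lit.pos a ∈ I ∧ Lit.neg a ∈ I)

def Total (I : Interp atom) : Prop := ∀ a : atom, Lit.pos a ∈ I ∨ Lit.neg a ∈ I

/-- An atom is defined (true or false, i.e. not undefined) in `I`. -/
def Defined (I : Interp atom) (A : atom) : Prop := Lit.pos A ∈ I ∨ Lit.neg A ∈ I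

/-- Every body literal of the clause is true in `I`. -/
def BodyTrue (I : Interp atom) (C : Clause atom) : Prop :=
  (∀ a ∈ C.pos, Lit.pos a ∈ I) ∧ (∀ b ∈ C.neg, Lit.neg b ∈ I)

/-- Some body literal of the clause is false in `I`. -/
def BodyFalse (I : Interp atom) (C : Clause atom) : Prop :=
  (∃ a ∈ C.pos, Lit.neg a ∈ I) ∨ (∃ b ∈ C.neg, Lit.pos b ∈ I)

/-- Three-valued model. -/
def Model3 (P : Program atom) (I : Interp atom) : Prop :=
  Consistent I ∧ ∀ C ∈ P,
    (BodyTrue I C → Lit.pos C.head ∈ I) ∧ (¬ BodyFalse I C → Lit.neg C.head ∉ I)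

/-- Two-valued model. -/
def Model2 (P : Program atom) (M : Set atom) : Prop :=
  ∀ C ∈ P, (∀ a ∈ C.pos, a ∈ M) → (∀ b ∈ C.neg, b ∉ M) → C.head ∈ M

/-- A program is definite if no clause has negative body literals. -/
def Definite (P : Program atom) : Prop := ∀ C ∈ P, C.neg = ∅

/-- The one-step operator `T_P⁺` for definite programs. -/
def Tplus (P : Program atom) (M : Set atom) : Set atom :=
  {A | ∃ C ∈ P, C.head = A ∧ C.neg = ∅ ∧ ∀ a ∈ C.pos, a ∈ M}

def TplusIter (P : Program atom) : ℕ → Set atom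
  | 0 => ∅
  | n + 1 => Tplus P (TplusIter P n)

/-- `T_P⁺ ↑ ω`, the least two-valued model of a definite program. -/
def TplusOmega (P : Program atom) : Set atom := ⋃ n, TplusIter P n

/-- The Gelfond–Lifschitz reduct `P/M`. -/
def GLreduct (P : Program atom) (M : Set atom) : Program atom :=
  {C' | ∃ C ∈ P, (∀ b ∈ C.neg, b ∉ M) ∧ C' = ⟨C.head, C.pos, ∅⟩}

/-- The Gelfond–Lifschitz operator. -/
def GLop (P : Program atom) (M : Set atom) : Set atom := TplusOmega (GLreduct P M)

/-- Stable model. -/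
def Stable (P : Program atom) (M : Set atom) : Prop := GLop P M = M

def posLits (S : Set atom) : Interp atom := Lit.pos '' S
def negLits (S : Set atom) : Interp atom := Lit.neg '' S

/-- Three-valued immediate-consequence operator `T_P`. -/
def TP (P : Program atom) (I : Interp atom) : Set atom :=
  {A | ∃ C ∈ P, C.head = A ∧ BodyTrue I C}

/-- `F_P`: atoms all of whose clauses have false bodies. -/
def FP (P : Program atom) (I : Interp atom) : Set atom :=
  {A | ∀ C ∈ P, C.head = A → BodyFalse I C}

/-- Fitting's operator `Φ_P`. -/
def Phi (P : Program atom) (I : Interp atom) : Interp atom :=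
  posLits (TP P I) ∪ negLits (FP P I)

/-- Knaster–Tarski least (pre-)fixed point of an operator on sets. -/
def lfpSet {L : Type*} (F : Set L → Set L) : Set L := ⋂₀ {I | F I ⊆ I}

/-- Knaster–Tarski greatest (post-)fixed point of an operator on sets. -/
def gfpSet {L : Type*} (F : Set L → Set L) : Set L := ⋃₀ {I | I ⊆ F I}

/-- The Fitting (Kripke–Kleene) model: least fixed point of `Φ_P`. -/
def FittingModel (P : Program atom) : Interp atom := lfpSet (Phi P)

/-- Transfinite iteration `F ↑ α` of an operator starting from `∅`. -/
noncomputable def iterOrd {L : Type*} (F : Set L → Set L) (α : Ordinal.{0}) : Set L :=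
  Ordinal.limitRecOn α ∅ (fun _ ih => F ih) (fun o _ ih => ⋃ β, ⋃ h : β < o, ih β h)

/-- `U` is an unfounded set of `P` with respect to `I`. -/
def Unfounded (P : Program atom) (I : Interp atom) (U : Set atom) : Prop :=
  ∀ A ∈ U, ∀ C ∈ P, C.head = A → BodyFalse I C ∨ ∃ a ∈ C.pos, a ∈ U

/-- The greatest unfounded set of `P` with respect to `I`. -/
def UP (P : Program atom) (I : Interp atom) : Set atom := ⋃₀ {U | Unfounded P I U}

/-- The van Gelder–Ross–Schlipf operator `W_P`. -/
def WP (P : Program atom) (I : Interp atom) : Interp atom :=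
  posLits (TP P I) ∪ negLits (UP P I)

/-- The well-founded model: least fixed point of `W_P`. -/
def WFModel (P : Program atom) : Interp atom := lfpSet (WP P)

/-- `P` satisfies (F) with respect to `I` and the level mapping `l`. -/
def CondF (P : Program atom) (I : Interp atom) (l : atom → Ordinal.{0}) : Prop :=
  ∀ A : atom, Defined I A →
    (Lit.pos A ∈ I ∧ ∃ C ∈ P, C.head = A ∧
        (∀ a ∈ C.pos, Lit.pos a ∈ I ∧ l a < l A) ∧
        (∀ b ∈ C.neg, Lit.neg b ∈ I ∧ l b < l A)) ∨
    (Lit.neg A ∈ I ∧ ∀ C ∈ P, C.head = A →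
        (∃ a ∈ C.pos, Lit.neg a ∈ I ∧ l a < l A) ∨
        (∃ b ∈ C.neg, Lit.pos b ∈ I ∧ l b < l A))

/-- `P` satisfies (WF) with respect to `I` and the level mapping `l`. -/
def CondWF (P : Program atom) (I : Interp atom) (l : atom → Ordinal.{0}) : Prop :=
  ∀ A : atom, Defined I A →
    (Lit.pos A ∈ I ∧ ∃ C ∈ P, C.head = A ∧
        (∀ a ∈ C.pos, Lit.pos a ∈ I ∧ l a < l A) ∧
        (∀ b ∈ C.neg, Lit.neg b ∈ I ∧ l b < l A)) ∨
    (Lit.neg A ∈ I ∧ ∀ C ∈ P, C.head = A →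
        (∃ a ∈ C.pos, Lit.neg a ∈ I ∧ l a ≤ l A) ∨
        (∃ b ∈ C.neg, Lit.pos b ∈ I ∧ l b < l A))

/-- `P` satisfies (WS) with respect to `I` and the level mapping `l`. -/
def CondWS (P : Program atom) (I : Interp atom) (l : atom → Ordinal.{0}) : Prop :=
  ∀ A : atom, Defined I A →
    (Lit.pos A ∈ I ∧ ∃ C ∈ P, C.head = A ∧
        (∀ a ∈ C.pos, Lit.pos a ∈ I ∧ l a < l A) ∧
        (∀ b ∈ C.neg, Lit.neg b ∈ I ∧ l b < l A)) ∨
    (Lit.neg A ∈ I ∧ ∀ C ∈ P, C.head = A →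
        (∃ a ∈ C.pos, Lit.neg a ∈ I ∧ l a < l A) ∨
        ((∀ a ∈ C.pos, l a ≤ l A) ∧ (∀ b ∈ C.neg, l b < l A) ∧
            ∃ a ∈ C.pos, Lit.neg a ∈ I) ∨
        (∃ b ∈ C.neg, Lit.pos b ∈ I ∧ l b < l A))

/-- `A` refers to `B`. -/
def RefersTo (P : Program atom) (A B : atom) : Prop :=
  ∃ C ∈ P, C.head = A ∧ (B ∈ C.pos ∨ B ∈ C.neg)

/-- `A` refers negatively to `B`. -/
def RefersNeg (P : Program atom) (A B : atom) : Prop :=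
  ∃ C ∈ P, C.head = A ∧ B ∈ C.neg

/-- `DepOn P A B`: `A` depends on `B`, i.e. `B ≤ A`. -/
def DepOn (P : Program atom) : atom → atom → Prop := Relation.TransGen (RefersTo P)

/-- `DepNeg P B A`: `B < A`, i.e. `A` depends negatively on `B`. -/
def DepNeg (P : Program atom) (B A : atom) : Prop :=
  ∃ C D, RefersNeg P C D ∧ (DepOn P A C ∨ C = A) ∧ (DepOn P D B ∨ B = D)

/-- `A ~ B`. -/
def Sim (P : Program atom) (A B : atom) : Prop :=
  A = B ∨ (DepNeg P A B ∧ DepNeg P B A)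

/-- The components of `P`: equivalence classes of `~`. -/
def IsComponent (P : Program atom) (C : Set atom) : Prop :=
  ∃ A : atom, C = {B | Sim P A B}

/-- A trivial component: a singleton `{A}` with `A ≮ A`. -/
def TrivialComponent (P : Program atom) (C : Set atom) : Prop :=
  ∃ A : atom, C = {A} ∧ ¬ DepNeg P A A

/-- The ordering `≺` on components. -/
def CompLt (P : Program atom) (C₁ C₂ : Set atom) : Prop :=
  C₁ ≠ C₂ ∧ ∀ A₁ ∈ C₁, ∃ A₂ ∈ C₂, DepNeg P A₁ A₂

def MinimalComponent (P : Program atom) (C : Set atom) : Prop :=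
  IsComponent P C ∧ ¬ ∃ C₂, IsComponent P C₂ ∧ CompLt P C₂ C

/-- The bottom stratum `S(P)`: union of all minimal components. -/
def bottomStratum (P : Program atom) : Set atom :=
  {A | ∃ C, MinimalComponent P C ∧ A ∈ C}

/-- The bottom layer `L(P)`: clauses with head in the bottom stratum. -/
def bottomLayer (P : Program atom) : Program atom :=
  {C ∈ P | C.head ∈ bottomStratum P}

/-- Delete from the body of `C` all literals true in `I`. -/
noncomputable def reduceClause (I : Interp atom) (C : Clause atom) : Clause atom :=
  letI : ∀ p : Prop, Decidable p := fun p => Classical.propDecidable p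
  ⟨C.head, C.pos.filter (fun a => Lit.pos a ∉ I), C.neg.filter (fun b => Lit.neg b ∉ I)⟩

/-- Steps (1) and (2) of the reduct of `P` with respect to `I`. -/
noncomputable def step12 (P : Program atom) (I : Interp atom) : Program atom :=
  {C' | ∃ C ∈ P, Lit.pos C.head ∉ I ∧ ¬ BodyFalse I C ∧ C' = reduceClause I C}

def IsUnitClause (C : Clause atom) : Prop := C.pos = ∅ ∧ C.neg = ∅

/-- The reduct `P/I` of Przymusinska–Przymusinski (steps (1)–(3)). -/
noncomputable def reduct (P : Program atom) (I : Interp atom) : Program atom :=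
  {C ∈ step12 P I | IsUnitClause C ∨ ¬ ∃ C' ∈ step12 P I, C'.head = C.head ∧ IsUnitClause C'}

/-- The atoms occurring in `P`. -/
def atomsOf (P : Program atom) : Set atom :=
  {A | ∃ C ∈ P, A = C.head ∨ A ∈ C.pos ∨ A ∈ C.neg}

/-- `R`: atoms undefined in `N` which are eliminated from `P` by reducing w.r.t. `N`. -/
noncomputable def Ratoms (P : Program atom) (N : Interp atom) : Set atom :=
  {A | A ∈ atomsOf P ∧ A ∉ atomsOf (reduct P N) ∧ ¬ Defined N A}

/-- The definite (partial) model of a definite program `Q`. -/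
def defPartialModel (Q : Program atom) : Interp atom :=
  posLits (TplusOmega Q) ∪ negLits (atomsOf Q \ TplusOmega Q)

/-- The stopping condition of the weakly perfect model construction at `N`. -/
noncomputable def stopCond (P : Program atom) (N : Interp atom) : Prop :=
  reduct P N = ∅ ∨ bottomStratum (reduct P N) = ∅ ∨
    ∃ C ∈ bottomLayer (reduct P N), C.neg ≠ ∅

/-- `M_α` computed from `N_α` (empty if the construction has stopped). -/
noncomputable def Mstep (P : Program atom) (N : Interp atom) : Interp atom :=
  letI : ∀ p : Prop, Decidable p := fun p => Classical.propDecidable p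
  if stopCond P N then ∅
  else defPartialModel (bottomLayer (reduct P N)) ∪ negLits (Ratoms P N)

/-- `N_α = ⋃_{0<δ<α} M_δ` of the weakly perfect model construction. -/
noncomputable def Nseq (P : Program atom) : Ordinal.{0} → Interp atom :=
  Ordinal.lt_wf.fix (C := fun _ => Interp atom)
    (fun α ih => ⋃ β : Ordinal.{0}, ⋃ h : β < α, Mstep P (ih β h))

/-- The stage at which the weakly perfect model construction stops. -/
noncomputable def wpStop (P : Program atom) : Ordinal.{0} :=
  sInf {α | stopCond P (Nseq P α)}

/-- The weakly perfect model `M_P = N_α ∪ ¬R_α` at the stopping stage `α`. -/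
noncomputable def weaklyPerfectModel (P : Program atom) : Interp atom :=
  Nseq P (wpStop P) ∪ negLits (Ratoms P (Nseq P (wpStop P)))

/-- Clause subsumption `C₁ ≼ C₂`. -/
def ClauseSub (C₁ C₂ : Clause atom) : Prop :=
  C₁.head = C₂.head ∧ C₁.pos ⊆ C₂.pos ∧ C₁.neg ⊆ C₂.neg

/-- `P'` subsumes `Q` model-consistently with respect to `I`: `P' ≼_I Q`. -/
def SubsumesMC (P' Q : Program atom) (I : Interp atom) : Prop :=
  (∀ C₁ ∈ P', ∃ C₂ ∈ Q, ClauseSub C₁ C₂ ∧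
      (∀ a ∈ C₂.pos, a ∉ C₁.pos → Lit.pos a ∈ I) ∧
      (∀ b ∈ C₂.neg, b ∉ C₁.neg → Lit.neg b ∈ I)) ∧
  (∀ C₂ ∈ Q, BodyTrue I C₂ → Lit.pos C₂.head ∉ I → ∃ C₁ ∈ P', ClauseSub C₁ C₂)

/-!
A literal of `W_P↑α` is produced by applying `W_P` to some earlier stage `W_P↑β`, `β < α`, so its
atom has level below `α`. An atom `A` of level `α` receives its truth value when `W_P` is applied
to `W_P↑α`. If `A` becomes true, some clause for `A` has its body true in `W_P↑α`, at levels below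
`α`. If `A` becomes false, it lies in the greatest unfounded set with respect to `W_P↑α`: each
clause for `A` has a body literal false in `W_P↑α`, or a positive body atom in that same set. All
atoms of the set become false simultaneously, which is why (WFiia) asks only for `l(A) ≥ l(Aᵢ)`.
-/

section Iteration

open OrdinalApprox

lemma iterOrd_add_one {L : Type*} (F : Set L → Set L) (α : Ordinal.{0}) :
    iterOrd F (α + 1) = F (iterOrd F α) :=
  Ordinal.limitRecOn_add_one ..

-- The ordinals of `lfpApprox` live in the universe of its lattice, whence `L : Type`.
variable {L : Type} {F : Set L → Set L} {x : L}

lemma iterOrd_eq_lfpApprox (hF : Monotone F) (α : Ordinal.{0}) :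
    iterOrd F α = lfpApprox ⟨F, hF⟩ ∅ α := by
  induction α using Ordinal.limitRecOn with
  | zero => rw [lfpApprox_zero, iterOrd, Ordinal.limitRecOn_zero]
  | add_one β ih =>
    rw [iterOrd_add_one, ih, lfpApprox_add_one _ (Set.empty_subset _)]
    rfl
  | limit α hα ih =>
    rw [lfpApprox_of_isSuccLimit _ hα, Set.iSup_eq_iUnion, Set.iUnion_subtype, iterOrd,
      Ordinal.limitRecOn_limit (h := hα)]
    exact Set.iUnion₂_congr ih

lemma mem_iterOrd_iff (hF : Monotone F) {α : Ordinal.{0}} :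
    x ∈ iterOrd F α ↔ ∃ β < α, x ∈ iterOrd F (β + 1) := by
  simp only [iterOrd_add_one]
  rw [iterOrd_eq_lfpApprox hF, lfpApprox]
  simp [iterOrd_eq_lfpApprox hF]

lemma iterOrd_subset_lfpSet (hF : Monotone F) (α : Ordinal.{0}) : iterOrd F α ⊆ lfpSet F := by
  rw [iterOrd_eq_lfpApprox hF]
  exact lfpApprox_le_of_mem_fixedPoints _ (OrderHom.isFixedPt_lfp ⟨F, hF⟩) (Set.empty_subset _) α

lemma exists_mem_iterOrd_add_one (hF : Monotone F) (hx : x ∈ lfpSet F) :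
    ∃ α : Ordinal.{0}, x ∈ iterOrd F (α + 1) := by
  obtain ⟨γ, hγ : lfpApprox _ ∅ γ = lfpSet F⟩ := lfp_mem_range_lfpApprox ⟨F, hF⟩
  rw [← hγ, ← iterOrd_eq_lfpApprox, mem_iterOrd_iff hF] at hx
  exact hx.imp fun _ => And.right

end Iteration

section Operators

variable {P : Program atom} {I J : Interp atom} {A : atom} {C : Clause atom} {ℓ : Lit atom}

lemma Defined.of_mem (hℓ : ℓ ∈ I) : Defined I ℓ.atomOf := by
  cases ℓ with
  | pos _ => exact Or.inl hℓ
  | neg _ => exact Or.inr hℓ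

lemma BodyTrue.mono (hIJ : I ⊆ J) (hC : BodyTrue I C) : BodyTrue J C :=
  ⟨fun a ha => hIJ (hC.1 a ha), fun b hb => hIJ (hC.2 b hb)⟩

lemma BodyFalse.mono (hIJ : I ⊆ J) (hC : BodyFalse I C) : BodyFalse J C :=
  hC.imp (fun ⟨a, ha, hneg⟩ => ⟨a, ha, hIJ hneg⟩) (fun ⟨b, hb, hpos⟩ => ⟨b, hb, hIJ hpos⟩)

lemma Unfounded.mono {U : Set atom} (hIJ : I ⊆ J) (hU : Unfounded P I U) : Unfounded P J U :=
  fun A hA C hC hhead => (hU A hA C hC hhead).imp_left (BodyFalse.mono hIJ)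

lemma TP_mono (P : Program atom) : Monotone (TP P) :=
  fun _ _ hIJ _ ⟨C, hC, hhead, hbody⟩ => ⟨C, hC, hhead, hbody.mono hIJ⟩

lemma UP_mono (P : Program atom) : Monotone (UP P) :=
  fun _ _ hIJ => Set.sUnion_subset_sUnion fun _ hU => Unfounded.mono hIJ hU

lemma WP_mono (P : Program atom) : Monotone (WP P) :=
  fun _ _ hIJ =>
    Set.union_subset_union (Set.image_mono (TP_mono P hIJ)) (Set.image_mono (UP_mono P hIJ))

lemma unfounded_UP (P : Program atom) (I : Interp atom) : Unfounded P I (UP P I) := by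
  rintro A ⟨U, hU, hA⟩ C hC hhead
  exact (hU A hA C hC hhead).imp_right fun ⟨a, ha, haU⟩ => ⟨a, ha, U, hU, haU⟩

lemma pos_mem_WP_iff : Lit.pos A ∈ WP P I ↔ A ∈ TP P I := by
  simp [WP, posLits, negLits]

lemma neg_mem_WP_iff : Lit.neg A ∈ WP P I ↔ A ∈ UP P I := by
  simp [WP, posLits, negLits]

end Operators

/-- The level mapping `l_P` of the well-founded model, as a total function: an atom undefined in
the model, which lies outside the domain of the partial map `l_P`, gets the junk value
`sInf ∅ = 0`. -/
noncomputable def wfLevel (P : Program atom) (A : atom) : Ordinal.{0} :=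
  sInf {α : Ordinal.{0} | Defined (iterOrd (WP P) (α + 1)) A}

section Levels

variable {P : Program atom} {A : atom} {C : Clause atom} {ℓ : Lit atom} {α : Ordinal.{0}}

lemma iterOrd_WP_subset_WFModel (P : Program atom) (α : Ordinal.{0}) :
    iterOrd (WP P) α ⊆ WFModel P :=
  iterOrd_subset_lfpSet (WP_mono P) α

lemma defined_iterOrd_wfLevel_add_one (hA : Defined (WFModel P) A) :
    Defined (iterOrd (WP P) (wfLevel P A + 1)) A := by
  refine csInf_mem (s := {α : Ordinal.{0} | Defined (iterOrd (WP P) (α + 1)) A}) ?_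
  rcases hA with hpos | hneg
  · exact (exists_mem_iterOrd_add_one (WP_mono P) hpos).imp fun _ => Or.inl
  · exact (exists_mem_iterOrd_add_one (WP_mono P) hneg).imp fun _ => Or.inr

lemma wfLevel_atomOf_le (hℓ : ℓ ∈ iterOrd (WP P) (α + 1)) : wfLevel P ℓ.atomOf ≤ α :=
  csInf_le' (Defined.of_mem hℓ)

lemma wfLevel_atomOf_lt (hℓ : ℓ ∈ iterOrd (WP P) α) : wfLevel P ℓ.atomOf < α := by
  obtain ⟨β, hβ, hℓβ⟩ := (mem_iterOrd_iff (WP_mono P)).mp hℓ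
  exact (wfLevel_atomOf_le hℓβ).trans_lt hβ

lemma mem_WFModel_and_wfLevel_atomOf_lt (hℓ : ℓ ∈ iterOrd (WP P) α) :
    ℓ ∈ WFModel P ∧ wfLevel P ℓ.atomOf < α :=
  ⟨iterOrd_WP_subset_WFModel P α hℓ, wfLevel_atomOf_lt hℓ⟩

lemma exists_clause_body_wfLevel_lt (hA : Lit.pos A ∈ iterOrd (WP P) (α + 1)) :
    ∃ C ∈ P, C.head = A ∧
      (∀ a ∈ C.pos, Lit.pos a ∈ WFModel P ∧ wfLevel P a < α) ∧
      (∀ b ∈ C.neg, Lit.neg b ∈ WFModel P ∧ wfLevel P b < α) := by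
  rw [iterOrd_add_one, pos_mem_WP_iff] at hA
  obtain ⟨C, hC, hhead, hpos, hneg⟩ := hA
  exact ⟨C, hC, hhead, fun a ha => mem_WFModel_and_wfLevel_atomOf_lt (hpos a ha),
    fun b hb => mem_WFModel_and_wfLevel_atomOf_lt (hneg b hb)⟩

lemma exists_false_body_literal_wfLevel (hA : Lit.neg A ∈ iterOrd (WP P) (α + 1)) (hC : C ∈ P)
    (hhead : C.head = A) :
    (∃ a ∈ C.pos, Lit.neg a ∈ WFModel P ∧ wfLevel P a ≤ α) ∨
      (∃ b ∈ C.neg, Lit.pos b ∈ WFModel P ∧ wfLevel P b < α) := by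
  rw [iterOrd_add_one, neg_mem_WP_iff] at hA
  rcases unfounded_UP P _ A hA C hC hhead with (⟨a, ha, hneg⟩ | ⟨b, hb, hpos⟩) | ⟨a, ha, haU⟩
  · exact Or.inl ⟨a, ha, (mem_WFModel_and_wfLevel_atomOf_lt hneg).imp_right le_of_lt⟩
  · exact Or.inr ⟨b, hb, mem_WFModel_and_wfLevel_atomOf_lt hpos⟩
  · have hneg : Lit.neg a ∈ iterOrd (WP P) (α + 1) := by
      rwa [iterOrd_add_one, neg_mem_WP_iff]
    exact Or.inl ⟨a, ha, iterOrd_WP_subset_WFModel P _ hneg, wfLevel_atomOf_le hneg⟩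

end Levels

theorem wellfounded_levels_satisfy_WF_general (P : Program atom) :
    CondWF P (WFModel P) (wfLevel P) := by
  intro A hA
  rcases defined_iterOrd_wfLevel_add_one hA with hpos | hneg
  · exact Or.inl ⟨iterOrd_WP_subset_WFModel P _ hpos, exists_clause_body_wfLevel_lt hpos⟩
  · exact Or.inr ⟨iterOrd_WP_subset_WFModel P _ hneg,
      fun _ hC hhead => exists_false_body_literal_wfLevel hneg hC hhead⟩

/-- `P` satisfies (WF) w.r.t. its well-founded model and the level mapping
`l_P(A) = least α such that A is not undefined in W_P↑(α+1)`. -/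
theorem wellfounded_levels_satisfy_WF {atom : Type} [Countable atom] (P : Program atom) :
    CondWF P (WFModel P)
      (fun A => sInf {α : Ordinal.{0} | Defined (iterOrd (WP P) (α + 1)) A}) :=
  wellfounded_levels_satisfy_WF_general P

end LP
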